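/- Let β ∈ {0,1}, λ > 0, and define m_{β,λ}(r) = m_β(λ r) for r > 0. Then for every integer k ≥ 0 there is a constant C_k depending only on k such that for all r with 1/2 ≤ r ≤ 2 (i.e., r ∼ 1), |∂_r^k ( 1 / m_{β,λ}'(r) )| ≤ C_k λ^{-1} ⟨√β λ⟩^{-1} ⟨λ⟩^{1/2}. -/

import Mathlib

noncomputable section

open Real

/-- Japanese bracket `⟨x⟩ = (1+|x|²)^{1/2}`. -/
def jap (x : ℝ) : ℝ := Real.sqrt (1 + x ^ 2)

/-- The symbol `m_β(r) = √(r(1+βr²)tanh r)`. -/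
def mSymb (β r : ℝ) : ℝ := Real.sqrt (r * (1 + β * r ^ 2) * Real.tanh r)

/-!
Call a nonnegative function `f` on `(0, ∞)` of Mikhlin type if `xⁿ |f⁽ⁿ⁾(x)| ≤ Cₙ f(x)` for all `n`.
Functions of this type are stable under sums, products and real powers, and `f'` inherits the
property whenever `f ≲ x f'`. The constants, `x` and `1 ± e^{-2x}` are of Mikhlin type, hence so are
`tanh x = (1 - e^{-2x}) / (1 + e^{-2x})` and `m_β`, uniformly in `β ≥ 0`. Since
`m_β² / x = (1 + β x²) tanh x` is increasing, `m_β ≤ 2 x m_β'`, so `m_β'` and `1 / m_β'` are of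
Mikhlin type as well, and `1 / m_β' ≤ 2 x / m_β ≤ 2 ⟨x⟩^{1/2} / ⟨√β x⟩`. Being scale invariant, the
estimate only has to be evaluated at `x = λ r`.
-/

open Set Finset
open scoped ContDiff NNReal Nat

section IteratedDeriv

theorem iteratedDeriv_comp_mul_left {𝕜 E : Type*} [NontriviallyNormedField 𝕜]
    [NormedAddCommGroup E] [NormedSpace 𝕜 E] (n : ℕ) (c : 𝕜) (f : 𝕜 → E) :
    iteratedDeriv n (fun x => f (c * x)) = fun x => c ^ n • iteratedDeriv n f (c * x) := by
  induction n with
  | zero => simp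
  | succ n ih =>
    ext x
    rw [iteratedDeriv_succ, ih, deriv_fun_const_smul_field, deriv_comp_mul_left, smul_smul,
      pow_succ, iteratedDeriv_succ]

theorem iteratedDeriv_one_div_deriv_comp_mul_left {𝕜 : Type*} [NontriviallyNormedField 𝕜]
    (n : ℕ) (c : 𝕜) (f : 𝕜 → 𝕜) (x : 𝕜) :
    iteratedDeriv n (fun y => 1 / deriv (fun z => f (c * z)) y) x =
      c⁻¹ * (c ^ n * iteratedDeriv n (fun y => 1 / deriv f y) (c * x)) := by
  have hscale : (fun y => 1 / deriv (fun z => f (c * z)) y) =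
      fun y => c⁻¹ * (fun z => 1 / deriv f z) (c * y) := by
    ext y
    simp only [deriv_comp_mul_left, smul_eq_mul, one_div, mul_inv]
  rw [hscale, iteratedDeriv_const_mul_field,
    iteratedDeriv_comp_mul_left (f := fun z => 1 / deriv f z)]
  rfl

theorem pow_mul_abs_iteratedDeriv_mul_le {f g : ℝ → ℝ} {n : ℕ} {x A B : ℝ} {C D : ℕ → ℝ}
    (hx : 0 ≤ x) (hf : ContDiffAt ℝ n f x) (hg : ContDiffAt ℝ n g x)
    (hfC : ∀ j ≤ n, x ^ j * |iteratedDeriv j f x| ≤ C j * A)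
    (hgD : ∀ j ≤ n, x ^ j * |iteratedDeriv j g x| ≤ D j * B) :
    x ^ n * |iteratedDeriv n (fun y => f y * g y) x| ≤
      (∑ j ∈ range (n + 1), n.choose j * C j * D (n - j)) * (A * B) := by
  rw [iteratedDeriv_fun_mul hf hg, sum_mul]
  calc x ^ n * |∑ j ∈ range (n + 1), n.choose j * iteratedDeriv j f x * iteratedDeriv (n - j) g x|
      ≤ x ^ n * ∑ j ∈ range (n + 1),
          |n.choose j * iteratedDeriv j f x * iteratedDeriv (n - j) g x| := by
        gcongr
        exact abs_sum_le_sum_abs _ _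
    _ = ∑ j ∈ range (n + 1), n.choose j * ((x ^ j * |iteratedDeriv j f x|) *
          (x ^ (n - j) * |iteratedDeriv (n - j) g x|)) := by
        rw [mul_sum]
        refine sum_congr rfl fun j hj => ?_
        rw [abs_mul, abs_mul, Nat.abs_cast,
          ← pow_mul_pow_sub x (Nat.lt_succ_iff.1 (mem_range.1 hj))]
        ring
    _ ≤ ∑ j ∈ range (n + 1), n.choose j * ((C j * A) * (D (n - j) * B)) := by
        refine sum_le_sum fun j hj => mul_le_mul_of_nonneg_left ?_ (Nat.cast_nonneg _)
        have hfj := hfC j (Nat.lt_succ_iff.1 (mem_range.1 hj))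
        exact mul_le_mul hfj (hgD _ (Nat.sub_le n j)) (by positivity)
          (le_trans (by positivity) hfj)
    _ = ∑ j ∈ range (n + 1), n.choose j * C j * D (n - j) * (A * B) :=
        sum_congr rfl fun j _ => by ring

theorem iteratedDeriv_succ_rpow_const {f : ℝ → ℝ} {n : ℕ} {x : ℝ}
    (hf : ContDiffAt ℝ (n + 1) f x) (hfx : f x ≠ 0) (a : ℝ) :
    iteratedDeriv (n + 1) (fun y => f y ^ a) x =
      a * iteratedDeriv n (fun y => deriv f y * f y ^ (a - 1)) x := by
  have hderiv : deriv (fun y => f y ^ a) =ᶠ[nhds x]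
      fun y => a * (deriv f y * f y ^ (a - 1)) := by
    filter_upwards [hf.eventually (by simp), hf.continuousAt.eventually_ne hfx] with y hfy hy
    rw [((hfy.differentiableAt (by simp)).hasDerivAt.rpow_const (Or.inl hy)).deriv]
    ring
  rw [iteratedDeriv_succ', hderiv.iteratedDeriv_eq, iteratedDeriv_const_mul_field]

end IteratedDeriv

/-- A family of nonnegative smooth functions on `(0, ∞)` satisfying scale-invariant derivative
bounds `xⁿ |F⁽ⁿ⁾(x)| ≤ Cₙ F(x)` in the spirit of Mikhlin's multiplier theorem, with constants that
do not depend on the member of the family. Each function serves as its own weight, so that no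
separate size function has to be carried along. -/
structure IsMikhlinFamily {ι : Type*} (F : ι → ℝ → ℝ) : Prop where
  nonneg : ∀ i, ∀ x > 0, 0 ≤ F i x
  contDiffOn : ∀ i, ContDiffOn ℝ ∞ (F i) (Ioi 0)
  bound : ∀ n : ℕ, ∃ C ≥ 0, ∀ i, ∀ x > 0, x ^ n * |iteratedDeriv n (F i) x| ≤ C * F i x

namespace IsMikhlinFamily

variable {ι : Type*} {F G : ι → ℝ → ℝ}

protected theorem contDiffAt (hF : IsMikhlinFamily F) (n : ℕ) (i : ι) {x : ℝ} (hx : 0 < x) :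
    ContDiffAt ℝ n (F i) x :=
  ((hF.contDiffOn i).contDiffAt (Ioi_mem_nhds hx)).of_le (mod_cast le_top)

protected theorem const {c : ι → ℝ} (hc : ∀ i, 0 ≤ c i) : IsMikhlinFamily fun i _ => c i where
  nonneg i _ _ := hc i
  contDiffOn _ := contDiffOn_const
  bound n := by
    refine ⟨1, zero_le_one, fun i x _ => ?_⟩
    rcases n with _ | n
    · simp [abs_of_nonneg (hc i)]
    · simpa [iteratedDeriv_const] using hc i

protected theorem id : IsMikhlinFamily fun (_ : ι) x => x where
  nonneg _ _ hx := hx.le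
  contDiffOn _ := contDiffOn_id
  bound n := by
    refine ⟨1, zero_le_one, fun _ x hx => ?_⟩
    rcases n with _ | _ | n
    · simp [abs_of_pos hx]
    · simp
    · simpa [iteratedDeriv_fun_id] using hx.le

protected theorem add (hF : IsMikhlinFamily F) (hG : IsMikhlinFamily G) :
    IsMikhlinFamily fun i x => F i x + G i x where
  nonneg i x hx := add_nonneg (hF.nonneg i x hx) (hG.nonneg i x hx)
  contDiffOn i := (hF.contDiffOn i).add (hG.contDiffOn i)
  bound n := by
    obtain ⟨C, hC, hFC⟩ := hF.bound n
    obtain ⟨D, hD, hGD⟩ := hG.bound n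
    refine ⟨C + D, add_nonneg hC hD, fun i x hx => ?_⟩
    rw [iteratedDeriv_fun_add (hF.contDiffAt n i hx) (hG.contDiffAt n i hx)]
    calc x ^ n * |iteratedDeriv n (F i) x + iteratedDeriv n (G i) x|
        ≤ x ^ n * |iteratedDeriv n (F i) x| + x ^ n * |iteratedDeriv n (G i) x| := by
          rw [← mul_add]
          gcongr
          exact abs_add_le _ _
      _ ≤ C * F i x + D * G i x := add_le_add (hFC i x hx) (hGD i x hx)
      _ ≤ (C + D) * (F i x + G i x) := by
          nlinarith [mul_nonneg hC (hG.nonneg i x hx), mul_nonneg hD (hF.nonneg i x hx)]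

protected theorem mul (hF : IsMikhlinFamily F) (hG : IsMikhlinFamily G) :
    IsMikhlinFamily fun i x => F i x * G i x where
  nonneg i x hx := mul_nonneg (hF.nonneg i x hx) (hG.nonneg i x hx)
  contDiffOn i := (hF.contDiffOn i).mul (hG.contDiffOn i)
  bound n := by
    choose C hC hFC using hF.bound
    choose D hD hGD using hG.bound
    exact ⟨∑ j ∈ range (n + 1), n.choose j * C j * D (n - j),
      sum_nonneg fun j _ => mul_nonneg (mul_nonneg (Nat.cast_nonneg _) (hC j)) (hD _),
      fun i x hx => pow_mul_abs_iteratedDeriv_mul_le hx.le (hF.contDiffAt n i hx)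
        (hG.contDiffAt n i hx) (fun j _ => hFC j i x hx) fun j _ => hGD j i x hx⟩

theorem exists_bound_iteratedDeriv_rpow (hF : IsMikhlinFamily F)
    (hpos : ∀ i, ∀ x > 0, 0 < F i x) (n : ℕ) (a : ℝ) :
    ∃ C ≥ 0, ∀ i, ∀ x > 0,
      x ^ n * |iteratedDeriv n (fun y => F i y ^ a) x| ≤ C * F i x ^ a := by
  induction n using Nat.strong_induction_on generalizing a with
  | _ n ih =>
    rcases n with _ | n
    · exact ⟨1, zero_le_one, fun i x hx => by
        simp [abs_of_pos (Real.rpow_pos_of_pos (hpos i x hx) a)]⟩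
    choose C hC hFC using hF.bound
    choose! D hD hFD using fun m hm => ih m hm (a - 1)
    refine ⟨|a| * ∑ j ∈ range (n + 1), n.choose j * C (j + 1) * D (n - j),
      mul_nonneg (abs_nonneg a) (sum_nonneg fun j _ =>
        mul_nonneg (mul_nonneg (Nat.cast_nonneg _) (hC _)) (hD _ (by lia))), fun i x hx => ?_⟩
    have hFx := hpos i x hx
    have hF_diff := hF.contDiffAt (n + 1) i hx
    have hF_deriv (j : ℕ) (_ : j ≤ n) :
        x ^ j * |iteratedDeriv j (deriv (F i)) x| ≤ C (j + 1) * (F i x / x) := by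
      rw [← iteratedDeriv_succ', mul_div_assoc', le_div_iff₀ hx, mul_right_comm, ← pow_succ]
      exact hFC (j + 1) i x hx
    have hLeibniz := pow_mul_abs_iteratedDeriv_mul_le hx.le
      (hF_diff.derivWithin (by simp)) ((hF.contDiffAt n i hx).rpow_const_of_ne hFx.ne')
      hF_deriv fun j hj => hFD j (by lia) i x hx
    rw [iteratedDeriv_succ_rpow_const hF_diff hFx.ne', abs_mul]
    calc x ^ (n + 1) * (|a| * |iteratedDeriv n (fun y => deriv (F i) y * F i y ^ (a - 1)) x|)
        = |a| * x * (x ^ n * |iteratedDeriv n (fun y => deriv (F i) y * F i y ^ (a - 1)) x|) := by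
          ring
      _ ≤ |a| * x * ((∑ j ∈ range (n + 1), n.choose j * C (j + 1) * D (n - j)) *
            (F i x / x * F i x ^ (a - 1))) := by gcongr
      _ = (|a| * ∑ j ∈ range (n + 1), n.choose j * C (j + 1) * D (n - j)) * F i x ^ a := by
          rw [Real.rpow_sub_one hFx.ne']
          field_simp

protected theorem rpow (hF : IsMikhlinFamily F) (hpos : ∀ i, ∀ x > 0, 0 < F i x) (a : ℝ) :
    IsMikhlinFamily fun i x => F i x ^ a where
  nonneg i x hx := Real.rpow_nonneg (hF.nonneg i x hx) a
  contDiffOn i := (hF.contDiffOn i).rpow_const_of_ne fun x hx => (hpos i x hx).ne'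
  bound n := hF.exists_bound_iteratedDeriv_rpow hpos n a

protected theorem sqrt (hF : IsMikhlinFamily F) (hpos : ∀ i, ∀ x > 0, 0 < F i x) :
    IsMikhlinFamily fun i x => √(F i x) := by
  simpa only [Real.sqrt_eq_rpow] using hF.rpow hpos (1 / 2)

protected theorem inv (hF : IsMikhlinFamily F) (hpos : ∀ i, ∀ x > 0, 0 < F i x) :
    IsMikhlinFamily fun i x => (F i x)⁻¹ := by
  simpa only [Real.rpow_neg_one] using hF.rpow hpos (-1)

protected theorem deriv (hF : IsMikhlinFamily F) {c : ℝ} (hc : 0 < c)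
    (h : ∀ i, ∀ x > 0, c * F i x ≤ x * deriv (F i) x) : IsMikhlinFamily fun i => deriv (F i) where
  nonneg i x hx := nonneg_of_mul_nonneg_right
    ((mul_nonneg hc.le (hF.nonneg i x hx)).trans (h i x hx)) hx
  contDiffOn i := (hF.contDiffOn i).deriv_of_isOpen isOpen_Ioi (by simp)
  bound n := by
    obtain ⟨C, hC, hFC⟩ := hF.bound (n + 1)
    refine ⟨C / c, by positivity, fun i x hx => le_of_mul_le_mul_left ?_ hx⟩
    calc x * (x ^ n * |iteratedDeriv n (deriv (F i)) x|)
        = x ^ (n + 1) * |iteratedDeriv (n + 1) (F i) x| := by rw [iteratedDeriv_succ']; ring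
      _ ≤ C * F i x := hFC i x hx
      _ = C / c * (c * F i x) := by field_simp
      _ ≤ C / c * (x * deriv (F i) x) :=
          mul_le_mul_of_nonneg_left (h i x hx) (by positivity)
      _ = x * (C / c * deriv (F i) x) := by ring

end IsMikhlinFamily

section Tanh

theorem pow_mul_exp_neg_le {t : ℝ} (ht : 0 ≤ t) {n : ℕ} (hn : n ≠ 0) :
    t ^ n * exp (-t) ≤ n ! * (1 - exp (-t)) := by
  obtain ⟨n, rfl⟩ := Nat.exists_eq_succ_of_ne_zero hn
  have hpartial : 1 + t ^ (n + 1) / (n + 1)! ≤ exp t := by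
    refine le_trans ?_ (Real.sum_le_exp_of_nonneg ht (n + 2))
    rw [sum_range_succ]
    gcongr
    simpa using single_le_sum (f := fun i => t ^ i / i !) (fun i _ => by positivity)
      (mem_range.2 n.succ_pos)
  calc t ^ (n + 1) * exp (-t)
      = (n + 1)! * ((1 + t ^ (n + 1) / (n + 1)!) * exp (-t) - exp (-t)) := by field_simp; ring
    _ ≤ (n + 1)! * (exp t * exp (-t) - exp (-t)) := by gcongr
    _ = (n + 1)! * (1 - exp (-t)) := by rw [← exp_add, add_neg_cancel, exp_zero]

theorem pow_mul_abs_iteratedDeriv_exp_neg_mul_le {c x : ℝ} (hc : 0 ≤ c) (hx : 0 ≤ x) {n : ℕ}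
    (hn : n ≠ 0) :
    x ^ n * |iteratedDeriv n (fun y => exp (-c * y)) x| ≤ n ! * (1 - exp (-c * x)) := by
  rw [iteratedDeriv_exp_const_mul]
  simpa [abs_mul, abs_of_nonneg hc, mul_pow, mul_comm, mul_left_comm, mul_assoc] using
    pow_mul_exp_neg_le (mul_nonneg hc hx) hn

variable {ι : Type*}

theorem isMikhlinFamily_one_sub_exp_neg_mul {c : ι → ℝ} (hc : ∀ i, 0 ≤ c i) :
    IsMikhlinFamily fun i x => 1 - exp (-c i * x) where
  nonneg i x hx := by
    simpa using mul_nonneg (hc i) hx.le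
  contDiffOn i := by fun_prop
  bound n := by
    refine ⟨n !, by positivity, fun i x hx => ?_⟩
    rcases eq_or_ne n 0 with rfl | hn
    · simp [abs_of_nonneg, mul_nonneg (hc i) hx.le]
    · rw [iteratedDeriv_const_sub (Nat.pos_of_ne_zero hn), iteratedDeriv_neg, abs_neg]
      exact pow_mul_abs_iteratedDeriv_exp_neg_mul_le (hc i) hx.le hn

theorem isMikhlinFamily_one_add_exp_neg_mul {c : ι → ℝ} (hc : ∀ i, 0 ≤ c i) :
    IsMikhlinFamily fun i x => 1 + exp (-c i * x) where
  nonneg i x _ := by positivity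
  contDiffOn i := by fun_prop
  bound n := by
    refine ⟨n !, by positivity, fun i x hx => ?_⟩
    rcases eq_or_ne n 0 with rfl | hn
    · simp [abs_of_nonneg, add_nonneg, exp_nonneg]
    · rw [iteratedDeriv_const_add (Nat.pos_of_ne_zero hn)]
      refine (pow_mul_abs_iteratedDeriv_exp_neg_mul_le (hc i) hx.le hn).trans ?_
      gcongr
      linarith [exp_pos (-c i * x)]

theorem tanh_eq_one_sub_exp_mul_inv (x : ℝ) :
    tanh x = (1 - exp (-2 * x)) * (1 + exp (-2 * x))⁻¹ := by
  have hexp : exp (-2 * x) = exp (-x) / exp x := by rw [← exp_sub]; ring_nf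
  rw [tanh_eq, hexp]
  field_simp

theorem isMikhlinFamily_tanh : IsMikhlinFamily fun (_ : ι) x => tanh x := by
  simpa only [tanh_eq_one_sub_exp_mul_inv] using
    (isMikhlinFamily_one_sub_exp_neg_mul fun _ => zero_le_two).mul
      ((isMikhlinFamily_one_add_exp_neg_mul fun _ => zero_le_two).inv fun _ _ _ => by positivity)

theorem tanh_strictMono : StrictMono tanh := fun x y hxy =>
  (strictMonoOn_artanh.lt_iff_lt (tanh_bijOn.mapsTo (mem_univ x))
    (tanh_bijOn.mapsTo (mem_univ y))).1 (by simpa only [artanh_tanh] using hxy)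

theorem tanh_pos {x : ℝ} (hx : 0 < x) : 0 < tanh x := by
  simpa using tanh_strictMono hx

theorem differentiable_tanh : Differentiable ℝ tanh := by
  have htanh : tanh = fun x => sinh x / cosh x := funext tanh_eq_sinh_div_cosh
  rw [htanh]
  exact differentiable_sinh.div differentiable_cosh fun x => (cosh_pos x).ne'

end Tanh

section JapaneseBracket

theorem jap_pos (x : ℝ) : 0 < jap x := Real.sqrt_pos.2 (by positivity)

theorem jap_sq (x : ℝ) : jap x ^ 2 = 1 + x ^ 2 := Real.sq_sqrt (by positivity)

theorem jap_mul_le {c r : ℝ} (hc : 1 ≤ c) (hr : |r| ≤ c) (x : ℝ) : jap (r * x) ≤ c * jap x := by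
  have hr2 : r ^ 2 ≤ c ^ 2 := sq_le_sq' (abs_le.1 hr).1 (abs_le.1 hr).2
  refine Real.sqrt_le_iff.2 ⟨mul_nonneg (by linarith) (jap_pos x).le, ?_⟩
  rw [mul_pow, mul_pow, jap_sq]
  nlinarith [sq_nonneg x]

theorem div_jap_le_tanh {x : ℝ} (hx : 0 ≤ x) : x / jap x ≤ tanh x := by
  have harsinh : arsinh x ≤ x := by
    rw [← sinh_le_sinh, sinh_arsinh]
    exact self_le_sinh_iff.2 hx
  rw [jap, ← tanh_arsinh]
  exact tanh_strictMono.monotone harsinh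

end JapaneseBracket

theorem half_sqrt_mul_le_mul_deriv_sqrt_mul {g : ℝ → ℝ} {x : ℝ} (hx : 0 < x) (hgx : 0 < g x)
    (hg : DifferentiableAt ℝ g x) (hg_deriv : 0 ≤ deriv g x) :
    1 / 2 * √(x * g x) ≤ x * deriv (fun y => √(y * g y)) x := by
  have hxg : 0 < x * g x := mul_pos hx hgx
  rw [(((hasDerivAt_id' x).fun_mul hg.hasDerivAt).sqrt hxg.ne').deriv]
  rw [mul_div_assoc', le_div_iff₀ (by positivity)]
  nlinarith [Real.sq_sqrt hxg.le, mul_nonneg (mul_nonneg hx.le hx.le) hg_deriv]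

section Symbol

theorem mSymb_eq_sqrt_mul (β x : ℝ) : mSymb β x = √(x * ((1 + β * x ^ 2) * tanh x)) := by
  rw [mSymb, mul_assoc]

theorem mSymb_pos {β x : ℝ} (hβ : 0 ≤ β) (hx : 0 < x) : 0 < mSymb β x := by
  have := tanh_pos hx
  exact Real.sqrt_pos.2 (by positivity)

theorem isMikhlinFamily_mSymb : IsMikhlinFamily fun β : ℝ≥0 => mSymb β := by
  have hquad : IsMikhlinFamily fun (β : ℝ≥0) x => 1 + (β : ℝ) * x ^ 2 := by
    simpa only [pow_two] using (IsMikhlinFamily.const fun _ => zero_le_one).add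
      ((IsMikhlinFamily.const NNReal.coe_nonneg).mul (IsMikhlinFamily.id.mul IsMikhlinFamily.id))
  refine ((IsMikhlinFamily.id.mul hquad).mul isMikhlinFamily_tanh).sqrt fun β x hx => ?_
  have := tanh_pos hx
  positivity

theorem half_mSymb_le_mul_deriv {β x : ℝ} (hβ : 0 ≤ β) (hx : 0 < x) :
    1 / 2 * mSymb β x ≤ x * deriv (mSymb β) x := by
  have htanh := tanh_pos hx
  have hmono : MonotoneOn (fun y => (1 + β * y ^ 2) * tanh y) (Ioi 0) := by
    intro y hy z _ hyz
    have := tanh_pos hy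
    have := tanh_strictMono.monotone hyz
    have := (mem_Ioi.1 hy).le
    dsimp only
    gcongr
  have hderiv : 0 ≤ deriv (fun y => (1 + β * y ^ 2) * tanh y) x := by
    rw [← derivWithin_of_isOpen isOpen_Ioi hx]
    exact hmono.derivWithin_nonneg
  have hdiff : DifferentiableAt ℝ (fun y => (1 + β * y ^ 2) * tanh y) x := by
    have := differentiable_tanh x
    fun_prop
  simpa only [← mSymb_eq_sqrt_mul] using
    half_sqrt_mul_le_mul_deriv_sqrt_mul hx (by positivity) hdiff hderiv

theorem deriv_mSymb_pos {β x : ℝ} (hβ : 0 ≤ β) (hx : 0 < x) : 0 < deriv (mSymb β) x :=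
  pos_of_mul_pos_right ((half_pos (mSymb_pos hβ hx)).trans_le
    (by linarith [half_mSymb_le_mul_deriv hβ hx])) hx.le

theorem isMikhlinFamily_one_div_deriv_mSymb :
    IsMikhlinFamily fun (β : ℝ≥0) x => 1 / deriv (mSymb β) x := by
  simpa only [one_div] using (isMikhlinFamily_mSymb.deriv one_half_pos
    fun β _ hx => half_mSymb_le_mul_deriv β.2 hx).inv fun β _ hx => deriv_mSymb_pos β.2 hx

theorem mul_jap_le_mSymb_mul_sqrt_jap {β x : ℝ} (hβ : 0 ≤ β) (hx : 0 ≤ x) :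
    x * jap (√β * x) ≤ mSymb β x * √(jap x) := by
  have htanh : x ≤ tanh x * jap x := (div_le_iff₀ (jap_pos x)).1 (div_jap_le_tanh hx)
  have hsq : jap (√β * x) ^ 2 = 1 + β * x ^ 2 := by rw [jap_sq, mul_pow, Real.sq_sqrt hβ]
  rw [mSymb, ← Real.sqrt_mul' _ (jap_pos x).le]
  apply Real.le_sqrt_of_sq_le
  calc (x * jap (√β * x)) ^ 2 = x * (1 + β * x ^ 2) * x := by rw [mul_pow, hsq]; ring
    _ ≤ x * (1 + β * x ^ 2) * (tanh x * jap x) := by gcongr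
    _ = x * (1 + β * x ^ 2) * tanh x * jap x := by ring

theorem one_div_deriv_mSymb_le {β x : ℝ} (hβ : 0 ≤ β) (hx : 0 < x) :
    1 / deriv (mSymb β) x ≤ 2 * (√(jap x) / jap (√β * x)) := by
  have hjap := jap_pos (√β * x)
  have hderiv := deriv_mSymb_pos hβ hx
  rw [mul_div_assoc', div_le_div_iff₀ hderiv hjap, one_mul]
  refine le_of_mul_le_mul_left ?_ hx
  calc x * jap (√β * x) ≤ mSymb β x * √(jap x) := mul_jap_le_mSymb_mul_sqrt_jap hβ hx.le
    _ ≤ (2 * (x * deriv (mSymb β) x)) * √(jap x) := by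
        gcongr
        linarith [half_mSymb_le_mul_deriv hβ hx]
    _ = x * (2 * √(jap x) * deriv (mSymb β) x) := by ring

theorem exists_pow_mul_abs_iteratedDeriv_one_div_deriv_mSymb_le (k : ℕ) :
    ∃ C ≥ 0, ∀ β ≥ 0, ∀ x > 0,
      x ^ k * |iteratedDeriv k (fun y => 1 / deriv (mSymb β) y) x| ≤
        C * (√(jap x) / jap (√β * x)) := by
  obtain ⟨C, hC, h⟩ := isMikhlinFamily_one_div_deriv_mSymb.bound k
  refine ⟨C * 2, by positivity, fun β hβ x hx => (h ⟨β, hβ⟩ x hx).trans ?_⟩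
  rw [mul_assoc]
  exact mul_le_mul_of_nonneg_left (one_div_deriv_mSymb_le hβ hx) hC

theorem sqrt_jap_div_jap_mul_le {β c r x : ℝ} (hc : 1 ≤ c) (hr : 0 < r) (hrc : r ≤ c)
    (hr_inv : r⁻¹ ≤ c) :
    √(jap (r * x)) / jap (√β * (r * x)) ≤ c ^ 2 * (√(jap x) / jap (√β * x)) := by
  have hnum : √(jap (r * x)) ≤ c * √(jap x) := by
    rw [Real.sqrt_le_iff, mul_pow, Real.sq_sqrt (jap_pos x).le]
    refine ⟨by positivity, (jap_mul_le hc (by rwa [abs_of_pos hr]) x).trans ?_⟩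
    have := jap_pos x
    gcongr
    nlinarith
  have hden : jap (√β * x) ≤ c * jap (√β * (r * x)) := by
    have h := jap_mul_le hc (r := r⁻¹) (by rwa [abs_of_pos (inv_pos.2 hr)]) (√β * (r * x))
    rwa [mul_left_comm, inv_mul_cancel_left₀ hr.ne'] at h
  have := jap_pos (√β * x)
  have := jap_pos (√β * (r * x))
  calc √(jap (r * x)) / jap (√β * (r * x))
      ≤ c * √(jap x) / (jap (√β * x) / c) := by
        gcongr
        rwa [div_le_iff₀' (by linarith)]
    _ = c ^ 2 * (√(jap x) / jap (√β * x)) := by field_simp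

end Symbol

theorem iteratedDeriv_inv_deriv_mSymb_scaled_general (k : ℕ) {a : ℝ} (ha : 0 < a) (b : ℝ) :
    ∃ C > (0 : ℝ), ∀ β : ℝ, 0 ≤ β → ∀ lam : ℝ, 0 < lam → ∀ r ∈ Set.Icc a b,
      |iteratedDeriv k (fun x => 1 / deriv (fun y => mSymb β (lam * y)) x) r| ≤
        C * (lam⁻¹ * (jap (Real.sqrt β * lam))⁻¹ * jap lam ^ ((1 : ℝ) / 2)) := by
  obtain ⟨C, hC, hbound⟩ := exists_pow_mul_abs_iteratedDeriv_one_div_deriv_mSymb_le k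
  obtain ⟨c, hc, hac, hbc⟩ : ∃ c, 1 ≤ c ∧ a⁻¹ ≤ c ∧ b ≤ c :=
    ⟨max 1 (max a⁻¹ b), by simp, by simp, by simp⟩
  refine ⟨(C + 1) * c ^ (k + 2), by positivity, fun β hβ lam hlam r ⟨har, hrb⟩ => ?_⟩
  have hr : 0 < r := ha.trans_le har
  have hr_inv : r⁻¹ ≤ c := (inv_anti₀ ha har).trans hac
  rw [iteratedDeriv_one_div_deriv_comp_mul_left, abs_mul, abs_mul, abs_of_pos (inv_pos.2 hlam),
    abs_of_pos (pow_pos hlam k), ← Real.sqrt_eq_rpow]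
  calc lam⁻¹ * (lam ^ k * |iteratedDeriv k (fun y => 1 / deriv (mSymb β) y) (lam * r)|)
      = lam⁻¹ * (r⁻¹ ^ k *
          ((lam * r) ^ k * |iteratedDeriv k (fun y => 1 / deriv (mSymb β) y) (lam * r)|)) := by
        rw [mul_pow, inv_pow]
        field_simp
    _ ≤ lam⁻¹ * (c ^ k * (C * (√(jap (lam * r)) / jap (√β * (lam * r))))) := by
        have := hbound β hβ _ (mul_pos hlam hr)
        refine mul_le_mul_of_nonneg_left (mul_le_mul ?_ this (by positivity) (by positivity)) ?_
        · gcongr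
        · positivity
    _ ≤ lam⁻¹ * (c ^ k * ((C + 1) * (c ^ 2 * (√(jap lam) / jap (√β * lam))))) := by
        have := jap_pos (√β * (lam * r))
        gcongr
        · exact le_add_of_nonneg_right zero_le_one
        · rw [mul_comm lam r]
          exact sqrt_jap_div_jap_mul_le hc hr (hrb.trans hbc) hr_inv
    _ = (C + 1) * c ^ (k + 2) * (lam⁻¹ * (jap (√β * lam))⁻¹ * √(jap lam)) := by ring

/-- Corollary on `m_{β,λ}(r) := m_β(λr)`: for every `k ≥ 0` there is a constant `C_k`
depending only on `k` such that for `β ∈ {0,1}`, `λ > 0` and `1/2 ≤ r ≤ 2`,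
`|∂_r^k (1/m_{β,λ}'(r))| ≤ C_k λ^{-1} ⟨√β λ⟩^{-1} ⟨λ⟩^{1/2}`. -/
theorem iteratedDeriv_inv_deriv_mSymb_scaled (k : ℕ) :
    ∃ C > (0 : ℝ), ∀ β : ℝ, β = 0 ∨ β = 1 → ∀ lam : ℝ, 0 < lam →
      ∀ r ∈ Set.Icc (1 / 2 : ℝ) 2,
        |iteratedDeriv k (fun x => 1 / deriv (fun y => mSymb β (lam * y)) x) r| ≤
          C * (lam⁻¹ * (jap (Real.sqrt β * lam))⁻¹ * jap lam ^ ((1 : ℝ) / 2)) := by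
  obtain ⟨C, hC, h⟩ := iteratedDeriv_inv_deriv_mSymb_scaled_general k (a := 1 / 2) (by norm_num) 2
  exact ⟨C, hC, fun β hβ => h β (by rcases hβ with rfl | rfl <;> norm_num)⟩
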